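/- arXiv:1909.11798 — 2 statements merged into one kernel-verified Lean document; each statement's English description precedes it below -/
import Mathlib

section
/- Let U be a nonempty set, F : ℝⁿ × U → ℝⁿ, C : ℝⁿ × U → ℝ, κ > 0, and let V : ℝⁿ → ℝ be continuously differentiable and bounded, satisfying the Hamilton–Jacobi–Bellman inequality C(y, u) + ⟪∇V(y), F(y, u)⟫ − κ·V(y) ≥ 0 for all y ∈ ℝⁿ and u ∈ U. Let x : [0, ∞) → ℝⁿ be differentiable and u : [0, ∞) → U be such that x′(t) = F(x(t), u(t)) for all t ≥ 0, the map t ↦ C(x(t), u(t)) is continuous, and t ↦ e^{−κt}·C(x(t), u(t)) is integrable on [0, ∞). Then ∫₀^∞ e^{−κt}·C(x(t), u(t)) dt ≥ V(x(0)). -/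
noncomputable section

open MeasureTheory Set Real

/-- Verification-theorem lower bound: a bounded `C¹` function `V` satisfying the
Hamilton–Jacobi–Bellman inequality `C(y,u) + ⟪∇V(y), F(y,u)⟫ − κ V(y) ≥ 0`
lower-bounds the discounted cost of every admissible trajectory. -/
theorem hjb_verification_lower_bound {n : ℕ} {U : Type*} [Nonempty U]
    (F : EuclideanSpace ℝ (Fin n) → U → EuclideanSpace ℝ (Fin n))
    (C : EuclideanSpace ℝ (Fin n) → U → ℝ) (κ : ℝ) (hκ : 0 < κ)
    (V : EuclideanSpace ℝ (Fin n) → ℝ) (hV : ContDiff ℝ 1 V)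
    (hVbdd : ∃ M : ℝ, ∀ y, |V y| ≤ M)
    (hHJB : ∀ (y : EuclideanSpace ℝ (Fin n)) (u : U),
      C y u + inner ℝ (gradient V y) (F y u) - κ * V y ≥ 0)
    (x : ℝ → EuclideanSpace ℝ (Fin n)) (u : ℝ → U)
    (hx : ∀ t ∈ Ici (0 : ℝ), HasDerivWithinAt x (F (x t) (u t)) (Ici (0 : ℝ)) t)
    (hCcont : ContinuousOn (fun t => C (x t) (u t)) (Ici (0 : ℝ)))
    (hint : IntegrableOn (fun t => Real.exp (-κ * t) * C (x t) (u t)) (Ici (0 : ℝ))) :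
    ∫ t in Ici (0 : ℝ), Real.exp (-κ * t) * C (x t) (u t) ≥ V (x 0) := by
  obtain ⟨M, hM⟩ := hVbdd
  have hexp : ∀ t : ℝ, HasDerivAt (fun t : ℝ => Real.exp (-κ * t)) (Real.exp (-κ * t) * (-κ)) t := by
    intro t
    have h := ((hasDerivAt_id t).const_mul (-κ)).exp
    simpa using h
  have hg : ∀ t ∈ Ici (0 : ℝ), HasDerivWithinAt (fun t => -(Real.exp (-κ * t) * V (x t)))
      (-(Real.exp (-κ * t) * (-κ) * V (x t)
        + Real.exp (-κ * t) * inner ℝ (gradient V (x t)) (F (x t) (u t)))) (Ici (0 : ℝ)) t := by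
    intro t ht
    have hd : DifferentiableAt ℝ V (x t) := (hV.differentiable (by norm_num)) (x t)
    have h1 := hd.hasGradientAt.hasFDerivAt.comp_hasDerivWithinAt t (hx t ht)
    have h2 : HasDerivWithinAt (fun t => V (x t))
        (inner ℝ (gradient V (x t)) (F (x t) (u t))) (Ici (0 : ℝ)) t := by
      simpa [Function.comp_def] using h1
    exact ((hexp t).hasDerivWithinAt.mul h2).neg
  have key : ∀ T : ℝ, 0 ≤ T → V (x 0) - Real.exp (-κ * T) * V (x T) ≤
      ∫ t in (0 : ℝ)..T, Real.exp (-κ * t) * C (x t) (u t) := by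
    intro T hT
    have h := intervalIntegral.sub_le_integral_of_hasDeriv_right_of_le hT
      (g := fun t => -(Real.exp (-κ * t) * V (x t)))
      (fun t ht => ((hg t ht.1).continuousWithinAt).mono Icc_subset_Ici_self)
      (fun t ht => (hg t ht.1.le).mono (fun s hs => (ht.1.trans hs).le))
      (hint.mono_set Icc_subset_Ici_self)
      (fun t ht => by
        have h1 := mul_nonneg (Real.exp_pos (-κ * t)).le (hHJB (x t) (u t))
        linarith)
    simp only [mul_zero, Real.exp_zero, one_mul] at h
    linarith
  have hlim0 : Filter.Tendsto (fun T : ℝ => Real.exp (-κ * T)) Filter.atTop (nhds 0) := by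
    refine Real.tendsto_exp_atBot.comp ?_
    exact Filter.tendsto_id.const_mul_atTop_of_neg (by linarith)
  have hlim : Filter.Tendsto (fun T : ℝ => V (x 0) - Real.exp (-κ * T) * V (x T))
      Filter.atTop (nhds (V (x 0))) := by
    have h1 : Filter.Tendsto (fun T : ℝ => Real.exp (-κ * T) * V (x T))
        Filter.atTop (nhds 0) := by
      refine squeeze_zero_norm (a := fun T : ℝ => Real.exp (-κ * T) * M) ?_ ?_
      · intro T
        rw [norm_mul, Real.norm_eq_abs, Real.norm_eq_abs, abs_of_pos (Real.exp_pos _)]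
        exact mul_le_mul_of_nonneg_left (hM _) (Real.exp_pos _).le
      · simpa using hlim0.mul_const M
    simpa using h1.const_sub (V (x 0))
  have hI := intervalIntegral_tendsto_integral_Ioi (0 : ℝ)
    (hint.mono_set Ioi_subset_Ici_self) Filter.tendsto_id
  rw [integral_Ici_eq_integral_Ioi]
  refine le_of_tendsto_of_tendsto hlim hI ?_
  filter_upwards [Filter.eventually_ge_atTop (0 : ℝ)] with T hT
  exact key T hT
end
end

section
/- Let α : ℝ → ℝ be a continuous, strictly increasing function with α(0) = 0 (a class-K function), let b : ℝⁿ → ℝ be differentiable, and let x : [0, ∞) → ℝⁿ be differentiable with b(x(0)) ≥ 0 and satisfying the barrier condition ⟪∇b(x(t)), x′(t)⟫ + α(b(x(t))) ≥ 0 for all t ≥ 0. Then b(x(t)) ≥ 0 for all t ≥ 0; in particular the set {y : b(y) ≥ 0} is forward invariant along the trajectory. -/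
noncomputable section

open Set

/-- Barrier invariance: if `b(x(0)) ≥ 0` and `⟪∇b(x(t)), x′(t)⟫ + α(b(x(t))) ≥ 0`
along the trajectory, where `α` is a class-K function (continuous, strictly
increasing, `α(0) = 0`), then `b(x(t)) ≥ 0` for all `t ≥ 0`. -/
theorem barrier_forward_invariance {n : ℕ}
    (α : ℝ → ℝ) (hα_cont : Continuous α) (hα_mono : StrictMono α)
    (hα_zero : α 0 = 0)
    (b : EuclideanSpace ℝ (Fin n) → ℝ) (hb : Differentiable ℝ b)
    (x : ℝ → EuclideanSpace ℝ (Fin n)) (x' : ℝ → EuclideanSpace ℝ (Fin n))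
    (hx : ∀ t ∈ Ici (0 : ℝ), HasDerivWithinAt x (x' t) (Ici (0 : ℝ)) t)
    (h0 : 0 ≤ b (x 0))
    (hbarrier : ∀ t ∈ Ici (0 : ℝ),
      inner ℝ (gradient b (x t)) (x' t) + α (b (x t)) ≥ 0) :
    ∀ t ∈ Ici (0 : ℝ), 0 ≤ b (x t) := by
  have hd : ∀ t ∈ Ici (0 : ℝ), HasDerivWithinAt (fun s => b (x s))
      (inner ℝ (gradient b (x t)) (x' t)) (Ici (0 : ℝ)) t := by
    intro t ht
    have h1 := (hb (x t)).hasGradientAt.hasFDerivAt.comp_hasDerivWithinAt t (hx t ht)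
    simp only [InnerProductSpace.toDual_apply_apply] at h1
    exact h1
  intro T hT
  by_contra hneg
  push Not at hneg
  have key := image_le_of_deriv_right_lt_deriv_boundary (a := 0) (b := T)
    (f := fun s => - b (x s)) (f' := fun t => - inner ℝ (gradient b (x t)) (x' t))
    (B := fun _ => - b (x T) / 2) (B' := fun _ => 0)
    (fun t ht => ((hd t ht.1).continuousWithinAt.mono Icc_subset_Ici_self).neg)
    (fun t ht => ((hd t ht.1).mono (Ici_subset_Ici.2 ht.1)).neg)
    (by show - b (x 0) ≤ - b (x T) / 2
        linarith)
    (fun t => hasDerivAt_const _ _)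
    (by
      intro t ht he
      have he' : - b (x t) = - b (x T) / 2 := he
      have h2 := hbarrier t ht.1
      have h3 : α (b (x t)) < α 0 := hα_mono (by linarith)
      show - inner ℝ (gradient b (x t)) (x' t) < 0
      linarith)
    (right_mem_Icc.2 hT)
  have key' : - b (x T) ≤ - b (x T) / 2 := key
  linarith
end
end
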